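/- Let n > 3. The Lie algebra of derivations of the Poisson algebra P₁,₃ⁿ has dimension n+1, and the Lie algebra of derivations of the Poisson algebra P₁,₄ⁿ also has dimension n+1. -/

import Mathlib

open scoped BigOperators

/-- The bilinear map on `Fin n → ℂ` determined by structure constants `c`. -/
noncomputable def sb {n : ℕ} (c : Fin n → Fin n → Fin n → ℂ) :
    (Fin n → ℂ) →ₗ[ℂ] (Fin n → ℂ) →ₗ[ℂ] (Fin n → ℂ) :=
  LinearMap.mk₂ ℂ (fun x y k => ∑ a, ∑ b, c a b k * (x a * y b))
    (fun x x' y => by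
      funext k
      simp [add_mul, mul_add, Finset.sum_add_distrib])
    (fun r x y => by
      funext k
      simp only [Pi.smul_apply, smul_eq_mul, Finset.mul_sum]
      exact Finset.sum_congr rfl fun a _ => Finset.sum_congr rfl fun b _ => by ring)
    (fun x y y' => by
      funext k
      simp [mul_add, Finset.sum_add_distrib])
    (fun r x y => by
      funext k
      simp only [Pi.smul_apply, smul_eq_mul, Finset.mul_sum]
      exact Finset.sum_congr rfl fun a _ => Finset.sum_congr rfl fun b _ => by ring)

/-- The Lie algebra (here: submodule) of derivations of the Poisson algebra on
`Fin n → ℂ` with multiplication `m` and bracket `b`. -/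
noncomputable def derivs {n : ℕ}
    (m b : (Fin n → ℂ) →ₗ[ℂ] (Fin n → ℂ) →ₗ[ℂ] (Fin n → ℂ)) :
    Submodule ℂ ((Fin n → ℂ) →ₗ[ℂ] (Fin n → ℂ)) where
  carrier := {φ | (∀ x y, φ (m x y) = m (φ x) y + m x (φ y)) ∧
      (∀ x y, φ (b x y) = b (φ x) y + b x (φ y))}
  add_mem' := by
    rintro φ ψ ⟨h1, h2⟩ ⟨g1, g2⟩
    refine ⟨fun x y => ?_, fun x y => ?_⟩ <;>
      simp only [LinearMap.add_apply, map_add, h1, h2, g1, g2] <;> abel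
  zero_mem' := by
    refine ⟨fun x y => ?_, fun x y => ?_⟩ <;> simp
  smul_mem' := by
    rintro r φ ⟨h1, h2⟩
    refine ⟨fun x y => ?_, fun x y => ?_⟩ <;>
      simp only [LinearMap.smul_apply, map_smul, h1, h2, smul_add]

/-- Multiplication of `P₁,₃ⁿ`: `e_i · e_j = e_{i+j}` for `2 ≤ i+j ≤ n−1`,
`i,j ≤ n−1`; all other products of basis vectors are zero. -/
noncomputable def mu11 (n : ℕ) : (Fin n → ℂ) →ₗ[ℂ] (Fin n → ℂ) →ₗ[ℂ] (Fin n → ℂ) :=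
  sb (fun a b k => if (a : ℕ) + (b : ℕ) + 1 = (k : ℕ) ∧ (k : ℕ) + 2 ≤ n then 1 else 0)

/-- Multiplication of `P₁,₄ⁿ`: additionally `eₙ·eₙ = e_{n−1}`. -/
noncomputable def mu12 (n : ℕ) : (Fin n → ℂ) →ₗ[ℂ] (Fin n → ℂ) →ₗ[ℂ] (Fin n → ℂ) :=
  sb (fun a b k =>
    (if (a : ℕ) + (b : ℕ) + 1 = (k : ℕ) ∧ (k : ℕ) + 2 ≤ n then 1 else 0) +
    (if (a : ℕ) + 1 = n ∧ (b : ℕ) + 1 = n ∧ (k : ℕ) + 2 = n then 1 else 0))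

/-- The bracket of `P₁,₃ⁿ`: `{e₁,eₙ} = e_{n−1}`. -/
noncomputable def brB (n : ℕ) : (Fin n → ℂ) →ₗ[ℂ] (Fin n → ℂ) →ₗ[ℂ] (Fin n → ℂ) :=
  sb (fun a b k =>
    if (a : ℕ) = 0 ∧ (b : ℕ) + 1 = n ∧ (k : ℕ) + 2 = n then 1
    else if (a : ℕ) + 1 = n ∧ (b : ℕ) = 0 ∧ (k : ℕ) + 2 = n then -1 else 0)

/-- Basis vectors of the truncated polynomial part, zero out of range (0-based). -/
noncomputable def eE (n i : ℕ) : Fin n → ℂ :=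
  fun k => if (k : ℕ) = i ∧ i + 2 ≤ n then 1 else 0

/-- The last basis vector. -/
noncomputable def eU (n : ℕ) : Fin n → ℂ := fun k => if (k : ℕ) + 1 = n then 1 else 0

lemma eE_zero {n i : ℕ} (h : n < i + 2) : eE n i = 0 := by
  funext k
  simp [eE]
  omega

lemma single_eq {n : ℕ} (i : Fin n) :
    (Pi.single i 1 : Fin n → ℂ) = if (i : ℕ) + 1 = n then eU n else eE n i := by
  funext k
  have := k.2
  have := i.2
  split_ifs with h
  · simp only [eU, Pi.single_apply, Fin.ext_iff]
    congr 1
    apply propext; omega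
  · simp only [eE, Pi.single_apply, Fin.ext_iff]
    congr 1
    apply propext; omega

lemma eE_eq_single {n i : ℕ} (h : i + 2 ≤ n) :
    eE n i = Pi.single (⟨i, by omega⟩ : Fin n) 1 := by
  rw [single_eq, if_neg]
  simp; omega

lemma eU_eq_single {n : ℕ} (h : 0 < n) :
    eU n = Pi.single (⟨n - 1, by omega⟩ : Fin n) 1 := by
  rw [single_eq, if_pos]
  simp; omega

lemma decomp {n : ℕ} (h : 0 < n) (x : Fin n → ℂ) :
    x = ∑ l : Fin n, x l • eE n l + x ⟨n - 1, by omega⟩ • eU n := by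
  funext k
  have hk := k.2
  simp only [Pi.add_apply, Finset.sum_apply, Pi.smul_apply, smul_eq_mul, eE, eU]
  rw [Finset.sum_eq_single k]
  · by_cases hk' : (k : ℕ) + 1 = n
    · have : k = ⟨n - 1, by omega⟩ := by ext; simp; omega
      have h2 : ¬ (k : ℕ) + 2 ≤ n := by omega
      simp [hk', h2, ← this]
    · have h2 : (k : ℕ) + 2 ≤ n := by omega
      simp [hk', h2]
  · intro b _ hb
    rw [if_neg, mul_zero]
    intro h
    exact hb (Fin.ext h.1.symm)
  · simp

lemma lin_ext {n : ℕ} {M : Type*} [AddCommMonoid M] [Module ℂ M]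
    {f g : (Fin n → ℂ) →ₗ[ℂ] M} (hE : ∀ i, f (eE n i) = g (eE n i))
    (hU : f (eU n) = g (eU n)) : f = g := by
  apply (Pi.basisFun ℂ (Fin n)).ext
  intro i
  rw [Pi.basisFun_apply, single_eq]
  split_ifs
  · exact hU
  · exact hE i

lemma bil_ext {n : ℕ} {M : Type*} [AddCommMonoid M] [Module ℂ M]
    {f g : (Fin n → ℂ) →ₗ[ℂ] (Fin n → ℂ) →ₗ[ℂ] M}
    (h1 : ∀ i j, f (eE n i) (eE n j) = g (eE n i) (eE n j))
    (h2 : ∀ i, f (eE n i) (eU n) = g (eE n i) (eU n))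
    (h3 : ∀ i, f (eU n) (eE n i) = g (eU n) (eE n i))
    (h4 : f (eU n) (eU n) = g (eU n) (eU n)) : f = g :=
  lin_ext (fun i => lin_ext (h1 i) (h2 i)) (lin_ext h3 h4)

/-- Leibniz on basis vectors suffices. -/
lemma leib {n : ℕ} (m : (Fin n → ℂ) →ₗ[ℂ] (Fin n → ℂ) →ₗ[ℂ] (Fin n → ℂ))
    (φ : (Fin n → ℂ) →ₗ[ℂ] (Fin n → ℂ))
    (h1 : ∀ i j, φ (m (eE n i) (eE n j)) = m (φ (eE n i)) (eE n j) + m (eE n i) (φ (eE n j)))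
    (h2 : ∀ i, φ (m (eE n i) (eU n)) = m (φ (eE n i)) (eU n) + m (eE n i) (φ (eU n)))
    (h3 : ∀ i, φ (m (eU n) (eE n i)) = m (φ (eU n)) (eE n i) + m (eU n) (φ (eE n i)))
    (h4 : φ (m (eU n) (eU n)) = m (φ (eU n)) (eU n) + m (eU n) (φ (eU n))) (x y) :
    φ (m x y) = m (φ x) y + m x (φ y) := by
  have : m.compr₂ φ = m.comp φ + m.compl₂ φ := by
    apply bil_ext <;> simpa
  exact congrArg (fun f => f x y) this

/-- The general derivation. -/
noncomputable def dd (n : ℕ) (a : Fin n → ℂ) (α c b d : ℂ) : (Fin n → ℂ) →ₗ[ℂ] (Fin n → ℂ) :=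
  (Pi.basisFun ℂ (Fin n)).constr ℂ (fun i =>
    if (i : ℕ) + 1 = n then c • eU n + b • eE n (n - 2) + d • eE n (n - 3)
    else ((i : ℂ) + 1) • ∑ l : Fin n, a l • eE n (i + l) + if (i : ℕ) = 0 then α • eU n else 0)

lemma dd_E {n : ℕ} (hn : 3 < n) (a : Fin n → ℂ) (α c b d : ℂ) (i : ℕ) :
    dd n a α c b d (eE n i) =
      ((i : ℂ) + 1) • ∑ l : Fin n, a l • eE n (i + l) + if i = 0 then α • eU n else 0 := by
  by_cases h : i + 2 ≤ n
  · rw [eE_eq_single h, dd, ← Pi.basisFun_apply, Module.Basis.constr_basis, if_neg]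
    simp; omega
  · rw [eE_zero (by omega), map_zero, if_neg (by omega), Finset.sum_eq_zero]
    · simp
    · intro l _
      rw [eE_zero (by omega), smul_zero]

lemma dd_U {n : ℕ} (hn : 3 < n) (a : Fin n → ℂ) (α c b d : ℂ) :
    dd n a α c b d (eU n) = c • eU n + b • eE n (n - 2) + d • eE n (n - 3) := by
  have h : dd n a α c b d (Pi.single (⟨n - 1, by omega⟩ : Fin n) 1) =
      c • eU n + b • eE n (n - 2) + d • eE n (n - 3) := by
    rw [dd, ← Pi.basisFun_apply, Module.Basis.constr_basis, if_pos]
    simp; omega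
  rwa [← eU_eq_single (by omega)] at h

lemma sum_top {n : ℕ} (hn : 3 < n) (a : Fin n → ℂ) :
    ∑ l : Fin n, a l • eE n (n - 2 + l) = a ⟨0, by omega⟩ • eE n (n - 2) := by
  rw [Finset.sum_eq_single (⟨0, by omega⟩ : Fin n)]
  · simp
  · intro l _ hl
    have : (l : ℕ) ≠ 0 := fun h => hl (Fin.ext h)
    rw [eE_zero (by omega), smul_zero]
  · simp

/-- Structure of the algebra in terms of `eE`, `eU`. -/
structure Str (n : ℕ) (ε δ : ℂ) (m b : (Fin n → ℂ) →ₗ[ℂ] (Fin n → ℂ) →ₗ[ℂ] (Fin n → ℂ)) :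
    Prop where
  mEE : ∀ i j, m (eE n i) (eE n j) = eE n (i + j + 1)
  mEU : ∀ i, m (eE n i) (eU n) = 0
  mUE : ∀ i, m (eU n) (eE n i) = 0
  mUU : m (eU n) (eU n) = ε • eE n (n - 2)
  bEE : ∀ i j, b (eE n i) (eE n j) = 0
  bEU : ∀ i, b (eE n i) (eU n) = if i = 0 then δ • eE n (n - 2) else 0
  bUE : ∀ i, b (eU n) (eE n i) = if i = 0 then - (δ • eE n (n - 2)) else 0
  bUU : b (eU n) (eU n) = 0

lemma sum_first {n : ℕ} (hn : 3 < n) (a : Fin n → ℂ) (v : Fin n → ℂ) (i : ℕ) :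
    ∑ l : Fin n, a l • (if i + (l : ℕ) = 0 then v else 0) =
      if i = 0 then a ⟨0, by omega⟩ • v else 0 := by
  by_cases hi : i = 0
  · subst hi
    rw [Finset.sum_eq_single (⟨0, by omega⟩ : Fin n)]
    · simp
    · intro l _ hl
      have : (l : ℕ) ≠ 0 := fun h => hl (Fin.ext h)
      simp [this]
    · simp
  · simp [hi]

lemma dd_mem {n : ℕ} (hn : 3 < n) {ε δ κ : ℂ}
    {m b : (Fin n → ℂ) →ₗ[ℂ] (Fin n → ℂ) →ₗ[ℂ] (Fin n → ℂ)} (S : Str n ε δ m b)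
    (hε : ε * (2 * κ) = ε * (n - 1)) (hδ : δ * κ = δ * (n - 2))
    (a : Fin n → ℂ) (β : ℂ) (α : ℂ) :
    dd n a α (κ * a ⟨0, by omega⟩) β (-(α * ε)) ∈ derivs m b := by
  have hn2 : ((n - 2 : ℕ) : ℂ) = n - 2 := by push_cast [show 2 ≤ n by omega]; ring
  have hz : ∀ i, i ≠ 0 → eE n (i + (n - 3) + 1) = 0 := fun i hi => eE_zero (by omega)
  have hz' : ∀ i, i ≠ 0 → eE n (n - 3 + i + 1) = 0 := fun i hi => eE_zero (by omega)
  have hy : ∀ i, eE n (i + (n - 2) + 1) = 0 := fun i => eE_zero (by omega)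
  have hy' : ∀ i, eE n (n - 2 + i + 1) = 0 := fun i => eE_zero (by omega)
  have e3 : n - 3 + 1 = n - 2 := by omega
  have n2 : n - 2 ≠ 0 := by omega
  have n3 : n - 3 ≠ 0 := by omega
  constructor
  · apply leib
    · intro i j
      have s1 : ∀ l : ℕ, i + l + j + 1 = i + j + 1 + l := fun l => by ring
      have s2 : ∀ l : ℕ, i + (j + l) + 1 = i + j + 1 + l := fun l => by ring
      simp only [S.mEE, dd_E hn, map_add, map_smul, map_sum, LinearMap.add_apply,
        LinearMap.smul_apply, LinearMap.sum_apply, s1, s2]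
      have t1 : m (if i = 0 then α • eU n else 0) (eE n j) = 0 := by
        split_ifs <;> simp [S.mUE]
      have t2 : m (eE n i) (if j = 0 then α • eU n else 0) = 0 := by
        split_ifs <;> simp [S.mEU]
      rw [t1, t2, if_neg (by omega), add_zero, add_zero, add_zero, ← add_smul]
      congr 1
      push_cast; ring
    · intro i
      simp only [S.mEE, S.mEU, dd_E hn, dd_U hn, map_add, map_smul, map_sum, LinearMap.add_apply,
        LinearMap.smul_apply, LinearMap.sum_apply, map_zero, hy]
      by_cases hi : i = 0
      · subst hi
        simp [S.mUU, e3, smul_smul]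
      · simp [hi, hz i hi]
    · intro i
      simp only [S.mEE, S.mUE, dd_E hn, dd_U hn, map_add, map_smul, map_sum, LinearMap.add_apply,
        LinearMap.smul_apply, LinearMap.sum_apply, map_zero, hy']
      by_cases hi : i = 0
      · subst hi
        simp [S.mUU, e3, smul_smul]
      · simp [hi, hz' i hi]
    · simp only [S.mUU, S.mUE, S.mEU, dd_E hn, dd_U hn, map_add, map_smul, map_sum,
        LinearMap.add_apply, LinearMap.smul_apply, sum_top hn, hn2, if_neg n2]
      simp only [smul_zero, add_zero, smul_smul, ← add_smul]
      congr 1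
      linear_combination (-a ⟨0, by omega⟩) * hε
  · apply leib
    · intro i j
      simp only [S.bEE, dd_E hn, map_add, map_smul, map_sum, LinearMap.add_apply,
        LinearMap.smul_apply, LinearMap.sum_apply, map_zero]
      by_cases hi : i = 0 <;> by_cases hj : j = 0 <;> simp [hi, hj, S.bUE, S.bEU]
    · intro i
      simp only [S.bEU, S.bEE, dd_E hn, dd_U hn, map_add, map_smul, map_sum, LinearMap.add_apply,
        LinearMap.smul_apply, LinearMap.sum_apply, sum_first hn]
      by_cases hi : i = 0
      · subst hi
        simp only [if_true, map_smul, dd_E hn, LinearMap.smul_apply, S.bUU, sum_top hn, hn2,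
          if_neg n2]
        simp only [smul_zero, add_zero, smul_smul, ← add_smul]
        congr 1
        push_cast
        linear_combination (-a ⟨0, by omega⟩) * hδ
      · simp [hi]
    · intro i
      simp only [S.bUE, S.bEE, dd_E hn, dd_U hn, map_add, map_smul, map_sum, LinearMap.add_apply,
        LinearMap.smul_apply, LinearMap.sum_apply, sum_first hn]
      by_cases hi : i = 0
      · subst hi
        simp only [if_true, map_neg, map_smul, dd_E hn, LinearMap.smul_apply, S.bUU, sum_top hn,
          hn2, if_neg n2]
        simp only [smul_zero, add_zero, smul_smul, smul_neg, ← neg_smul, ← add_smul]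
        congr 1
        push_cast
        linear_combination (a ⟨0, by omega⟩) * hδ
      · simp [hi]
    · simp [S.bUU, S.bUE, S.bEU, dd_U hn, n2, n3]

lemma der_zero {n : ℕ} (hn : 3 < n) {ε δ : ℂ}
    {m b : (Fin n → ℂ) →ₗ[ℂ] (Fin n → ℂ) →ₗ[ℂ] (Fin n → ℂ)} (S : Str n ε δ m b)
    (hne : ε ≠ 0 ∨ δ ≠ 0) (φ : (Fin n → ℂ) →ₗ[ℂ] (Fin n → ℂ)) (hφ : φ ∈ derivs m b)
    (h0 : φ (eE n 0) = 0) (h1 : φ (eU n) ⟨n - 2, by omega⟩ = 0) : φ = 0 := by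
  obtain ⟨hm, hb⟩ := hφ
  have hE : ∀ i, φ (eE n i) = 0 := by
    intro i
    induction i with
    | zero => exact h0
    | succ i ih =>
      have := hm (eE n i) (eE n 0)
      rw [S.mEE, ih, h0] at this
      simpa using this
  have hEn : eE n (n - 2) ≠ 0 := by
    intro h
    have := congrFun h ⟨n - 2, by omega⟩
    simp [eE] at this
    omega
  have hU0 : ∀ k : Fin n, (k : ℕ) + 1 ≠ n → φ (eU n) k = 0 := by
    intro k hk
    have hk2 := k.2
    by_cases hk3 : (k : ℕ) + 2 = n
    · have : k = ⟨n - 2, by omega⟩ := by ext; simp; omega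
      rw [this, h1]
    have := hm (eE n 0) (eU n)
    rw [S.mEU, h0, map_zero, map_zero, LinearMap.zero_apply, zero_add,
      decomp (by omega) (φ (eU n))] at this
    simp only [map_add, map_sum, map_smul, S.mEE, S.mEU] at this
    have := congrFun this ⟨k + 1, by omega⟩
    simp only [Pi.zero_apply, Pi.add_apply, Finset.sum_apply, Pi.smul_apply, smul_eq_mul, eE] at this
    rw [Finset.sum_eq_single k] at this
    · rw [if_pos (by simp; omega)] at this
      simpa using this.symm
    · intro l _ hl
      rw [if_neg, mul_zero]
      rintro ⟨h, -⟩
      apply hl; ext; simp at h; omega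
    · simp
  have hU : φ (eU n) = φ (eU n) ⟨n - 1, by omega⟩ • eU n := by
    funext k
    by_cases hk : (k : ℕ) + 1 = n
    · have : k = ⟨n - 1, by omega⟩ := by ext; simp; omega
      rw [← this]; simp [eU, hk]
    · rw [hU0 k hk]; simp [eU, hk]
  have hc : φ (eU n) ⟨n - 1, by omega⟩ = 0 := by
    generalize φ (eU n) ⟨n - 1, by omega⟩ = c at hU
    rcases hne with h | h
    · have := hm (eU n) (eU n)
      rw [hU, S.mUU, map_smul, hE] at this
      simp only [map_smul, LinearMap.smul_apply, S.mUU, smul_zero, smul_smul, ← add_smul] at this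
      have := (smul_eq_zero.1 this.symm).resolve_right hEn
      have : ε * (2 * c) = 0 := by linear_combination this
      simpa [h] using this
    · have := hb (eE n 0) (eU n)
      rw [hU, S.bEU, if_pos rfl, map_smul, hE, h0] at this
      simp only [map_smul, S.bEU, if_true, map_zero, LinearMap.zero_apply, zero_add, smul_zero,
        smul_smul] at this
      have := (smul_eq_zero.1 this.symm).resolve_right hEn
      simpa [h] using this
  apply lin_ext
  · intro i; rw [hE]; rfl
  · rw [hU, hc]; simp

lemma main_dim {n : ℕ} (hn : 3 < n) {ε δ κ : ℂ}
    {m b : (Fin n → ℂ) →ₗ[ℂ] (Fin n → ℂ) →ₗ[ℂ] (Fin n → ℂ)} (S : Str n ε δ m b)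
    (hne : ε ≠ 0 ∨ δ ≠ 0)
    (hε : ε * (2 * κ) = ε * (n - 1)) (hδ : δ * κ = δ * (n - 2)) :
    Module.finrank ℂ ↥(derivs m b) = n + 1 := by
  let F : (↥(derivs m b)) →ₗ[ℂ] (Fin n → ℂ) × ℂ :=
    { toFun := fun φ => (φ.1 (eE n 0), φ.1 (eU n) ⟨n - 2, by omega⟩)
      map_add' := fun _ _ => rfl
      map_smul' := fun _ _ => rfl }
  have hF : Function.Bijective F := by
    constructor
    · rintro ⟨φ, hφ⟩ ⟨ψ, hψ⟩ h
      have h' := Prod.ext_iff.1 h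
      have ha : φ (eE n 0) = ψ (eE n 0) := h'.1
      have hb : φ (eU n) ⟨n - 2, by omega⟩ = ψ (eU n) ⟨n - 2, by omega⟩ := h'.2
      have hsub : φ - ψ ∈ derivs m b := Submodule.sub_mem _ hφ hψ
      apply Subtype.ext
      apply sub_eq_zero.1
      apply der_zero hn S hne (φ - ψ) hsub
      · rw [LinearMap.sub_apply, ha, sub_self]
      · rw [LinearMap.sub_apply, Pi.sub_apply, hb, sub_self]
    · rintro ⟨a, β⟩
      refine ⟨⟨_, dd_mem hn S hε hδ a β (a ⟨n - 1, by omega⟩)⟩, ?_⟩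
      refine Prod.ext ?_ ?_
      · change dd _ _ _ _ _ _ _ = a
        rw [dd_E hn]
        simpa using (decomp (by omega) a).symm
      · change dd _ _ _ _ _ _ _ _ = β
        rw [dd_U hn]
        have h1 : n - 2 + 1 ≠ n := by omega
        have h2 : n - 2 ≠ n - 3 := by omega
        have h3 : n - 2 + 2 ≤ n := by omega
        simp [eU, eE, h1, h2, h3]
  rw [(LinearEquiv.ofBijective F hF).finrank_eq]
  simp

lemma sb_single {n : ℕ} (c : Fin n → Fin n → Fin n → ℂ) (i j k : Fin n) :
    sb c (Pi.single i 1) (Pi.single j 1) k = c i j k := by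
  simp [sb, LinearMap.mk₂_apply, Pi.single_apply]

/-- Reduce evaluation of `sb` on our vectors to structure constants. -/
lemma sb_EE {n : ℕ} (c : Fin n → Fin n → Fin n → ℂ) (v : ℕ → ℕ → Fin n → ℂ)
    (h : ∀ i j k : Fin n, (i : ℕ) + 2 ≤ n → (j : ℕ) + 2 ≤ n → c i j k = v i j k)
    (h0 : ∀ i j, n < i + 2 ∨ n < j + 2 → v i j = 0) (i j : ℕ) :
    sb c (eE n i) (eE n j) = v i j := by
  by_cases hi : i + 2 ≤ n
  · by_cases hj : j + 2 ≤ n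
    · funext k
      rw [eE_eq_single hi, eE_eq_single hj, sb_single, h _ _ _ hi hj]
    · rw [eE_zero (i := j) (by omega), h0 _ _ (Or.inr (by omega)), map_zero]
  · rw [eE_zero (i := i) (by omega), h0 _ _ (Or.inl (by omega)), map_zero, LinearMap.zero_apply]

lemma sb_EU {n : ℕ} (hn : 0 < n) (c : Fin n → Fin n → Fin n → ℂ) (v : ℕ → Fin n → ℂ)
    (h : ∀ i j k : Fin n, (i : ℕ) + 2 ≤ n → (j : ℕ) + 1 = n → c i j k = v i k)
    (h0 : ∀ i, n < i + 2 → v i = 0) (i : ℕ) :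
    sb c (eE n i) (eU n) = v i := by
  by_cases hi : i + 2 ≤ n
  · funext k
    rw [eE_eq_single hi, eU_eq_single hn, sb_single, h _ _ _ hi (by simp; omega)]
  · rw [eE_zero (i := i) (by omega), h0 _ (by omega), map_zero, LinearMap.zero_apply]

lemma sb_UE {n : ℕ} (hn : 0 < n) (c : Fin n → Fin n → Fin n → ℂ) (v : ℕ → Fin n → ℂ)
    (h : ∀ i j k : Fin n, (i : ℕ) + 2 ≤ n → (j : ℕ) + 1 = n → c j i k = v i k)
    (h0 : ∀ i, n < i + 2 → v i = 0) (i : ℕ) :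
    sb c (eU n) (eE n i) = v i := by
  by_cases hi : i + 2 ≤ n
  · funext k
    rw [eE_eq_single hi, eU_eq_single hn, sb_single, h _ _ _ hi (by simp; omega)]
  · rw [eE_zero (i := i) (by omega), h0 _ (by omega), map_zero]

lemma sb_UU {n : ℕ} (hn : 0 < n) (c : Fin n → Fin n → Fin n → ℂ) (v : Fin n → ℂ)
    (h : ∀ i j k : Fin n, (i : ℕ) + 1 = n → (j : ℕ) + 1 = n → c j i k = v k) :
    sb c (eU n) (eU n) = v := by
  funext k
  rw [eU_eq_single hn, sb_single, h _ _ _ (by simp; omega) (by simp; omega)]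

lemma str13 {n : ℕ} (hn : 3 < n) : Str n 0 1 (mu11 n) (brB n) where
  mEE := sb_EE _ (fun i j => eE n (i + j + 1)) (by intros; simp only [eE]; grind)
    (fun i j h => eE_zero (by omega))
  mEU := sb_EU (by omega) _ (fun i => 0) (by intros; simp only [Pi.zero_apply]; grind) (by simp)
  mUE := sb_UE (by omega) _ (fun i => 0) (by intros; simp only [Pi.zero_apply]; grind) (by simp)
  mUU := sb_UU (by omega) _ _ (by intros; simp only [zero_smul, Pi.zero_apply]; grind)
  bEE := sb_EE _ (fun i j => 0) (by intros; simp only [Pi.zero_apply]; grind) (by simp)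
  bEU := sb_EU (by omega) _ _
    (by intro i j k _ _; split_ifs <;> simp [eE] <;> grind) (by intro i h; rw [if_neg]; omega)
  bUE := sb_UE (by omega) _ _
    (by intro i j k _ _; split_ifs <;> simp [eE] <;> grind) (by intro i h; rw [if_neg]; omega)
  bUU := sb_UU (by omega) _ _ (by intros; simp only [Pi.zero_apply]; grind)

lemma str14 {n : ℕ} (hn : 3 < n) : Str n 1 0 (mu12 n) 0 where
  mEE := sb_EE _ (fun i j => eE n (i + j + 1)) (by intros; simp only [eE]; grind)
    (fun i j h => eE_zero (by omega))
  mEU := sb_EU (by omega) _ (fun i => 0) (by intros; simp only [Pi.zero_apply]; grind) (by simp)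
  mUE := sb_UE (by omega) _ (fun i => 0) (by intros; simp only [Pi.zero_apply]; grind) (by simp)
  mUU := sb_UU (by omega) _ _ (by intros; simp only [one_smul, eE]; grind)
  bEE := by simp
  bEU := by simp
  bUE := by simp
  bUU := by simp

/-- For n > 3, the Lie algebras of derivations of the Poisson algebras `P₁,₃ⁿ`
and `P₁,₄ⁿ` both have dimension `n + 1`. -/
theorem stmt13 (n : ℕ) (hn : 3 < n) :
    Module.finrank ℂ ↥(derivs (mu11 n) (brB n)) = n + 1 ∧
    Module.finrank ℂ ↥(derivs (mu12 n) 0) = n + 1 := by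
  constructor
  · exact main_dim hn (κ := (n : ℂ) - 2) (str13 hn) (Or.inr one_ne_zero) (by ring) (by ring)
  · exact main_dim hn (κ := ((n : ℂ) - 1) / 2) (str14 hn) (Or.inl one_ne_zero) (by ring) (by ring)
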